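/- Let m ≥ 1 and t ≥ 2 be fixed integers. Then there exists n₀ such that for all integers n ≥ n₀, the Ramsey number satisfies R(C_{2m+1}, K₁ + nK_t) = 2·n·t + 1, where C_{2m+1} is the cycle on 2m + 1 vertices. -/

import Mathlib

open SimpleGraph

/-- `containsCopy F G` : the graph `F` contains a copy of the graph `G` (as a subgraph). -/
def containsCopy {V W : Type*} (F : SimpleGraph V) (G : SimpleGraph W) : Prop :=
  ∃ f : G →g F, Function.Injective f

/-- `arrows N G H` : every red/blue coloring of the edges of `K_N` (given by the graph `R` of
red edges, whose complement is the graph of blue edges) contains a red copy of `G` or a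
blue copy of `H`. -/
def arrows {V W : Type*} (N : ℕ) (G : SimpleGraph V) (H : SimpleGraph W) : Prop :=
  ∀ R : SimpleGraph (Fin N), containsCopy R G ∨ containsCopy Rᶜ H

/-- The Ramsey number `R(G, H)`. -/
noncomputable def ramseyNumber {V W : Type*} (G : SimpleGraph V) (H : SimpleGraph W) : ℕ :=
  sInf { N : ℕ | 0 < N ∧ arrows N G H }

/-- The generalized fan `K₁ + nK_t` : the join of a single vertex (`none`) with `n` disjoint
copies of `K_t`. -/
def genFan (n t : ℕ) : SimpleGraph (Option (Fin n × Fin t)) :=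
  SimpleGraph.fromRel (fun a b =>
    a = none ∨ ∃ p q : Fin n × Fin t, a = some p ∧ b = some q ∧ p.1 = q.1)

/-- A graph `G` is edge-critical if it has an edge `e` with `χ(G - e) = χ(G) - 1`. -/
def EdgeCritical {V : Type*} (G : SimpleGraph V) : Prop :=
  ∃ u v : V, G.Adj u v ∧ (G.deleteEdges {s(u, v)}).chromaticNumber + 1 = G.chromaticNumber

/-- `K_m ⊔ K_{1,ℓ}` : the complete graph on the `m` vertices `some i`, together with one new
vertex `none` joined to exactly the `ℓ` vertices `some i` with `i < ℓ` (for `ℓ ≤ m`). -/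
def KstarK (m ℓ : ℕ) : SimpleGraph (Option (Fin m)) :=
  SimpleGraph.fromRel (fun a b =>
    ((∃ i : Fin m, a = some i) ∧ ∃ j : Fin m, b = some j) ∨
      (a = none ∧ ∃ j : Fin m, b = some j ∧ (j : ℕ) < ℓ))

/-- `starArrows m ℓ G H` : every red/blue coloring of the edges of `K_m ⊔ K_{1,ℓ}` (the red
edges forming a subgraph `R`, the blue edges the remaining edges) contains a red copy of `G`
or a blue copy of `H`. -/
def starArrows {V W : Type*} (m ℓ : ℕ) (G : SimpleGraph V) (H : SimpleGraph W) : Prop :=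
  ∀ R : SimpleGraph (Option (Fin m)), R ≤ KstarK m ℓ →
    containsCopy R G ∨ containsCopy (KstarK m ℓ \ R) H

/-- The star-critical Ramsey number `r₊(G, H)`. -/
noncomputable def starRamsey {V W : Type*} (G : SimpleGraph V) (H : SimpleGraph W) : ℕ :=
  sInf { ℓ : ℕ | starArrows (ramseyNumber G H - 1) ℓ G H }

/-- The chromatic number of `G` as a natural number. -/
noncomputable def chromNum {V : Type*} (G : SimpleGraph V) : ℕ := G.chromaticNumber.toNat

/-- `s(G)` : the minimum size of a color class over all proper `χ(G)`-colorings of `G`. -/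
noncomputable def minClassSize {V : Type*} (G : SimpleGraph V) : ℕ :=
  sInf { m : ℕ | ∃ C : G.Coloring (Fin (chromNum G)), ∃ i : Fin (chromNum G),
    m = {v | C v = i}.ncard }

/-- `τ(G)` : the minimum, over all proper `χ(G)`-colorings of `G` having a color class `U_j`
of size `s(G)`, over all vertices `v ∈ U_j` and all other color classes `U_i`, of the number
of neighbors of `v` in `U_i`. -/
noncomputable def tauNum {V : Type*} (G : SimpleGraph V) : ℕ :=
  sInf { m : ℕ | ∃ C : G.Coloring (Fin (chromNum G)), ∃ j : Fin (chromNum G),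
    {v | C v = j}.ncard = minClassSize G ∧
    ∃ v, C v = j ∧ ∃ i : Fin (chromNum G), i ≠ j ∧ m = {u | C u = i ∧ G.Adj v u}.ncard }

/-!
Lower bound: on `2nt` vertices, the red complete bipartite graph between two halves of size `nt`
has no odd cycle, and each blue component is too small for the connected fan on `nt + 1` vertices.

Upper bound: on `2nt + 1` vertices, suppose there is neither a red `C_{2m+1}` nor a blue fan. By
Ramsey's theorem every large set contains a blue `K_t`, so a blue neighbourhood of size `nt + O(1)`
would contain `n` disjoint ones; hence the red minimum degree is at least `nt - O(1)`, well above
two fifths of the vertices. This forces the red graph to be bipartite: call two vertices similar if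
they share at least a large constant number of red neighbours. By a Kővári–Sós–Turán count, similar
vertices lie in one side of a `K_{m+1,m+1}`; since no vertex has neighbours on both of its sides,
similar vertices are nonadjacent and their neighbourhoods miss another whole neighbourhood, which
makes similarity transitive. By inclusion–exclusion there are at most two classes. The larger side
of the bipartition is a blue clique on `nt + 1` vertices, which contains the fan.
-/

open Finset

section InclusionExclusion

variable {α : Type*} [DecidableEq α]

lemma card_inter_add_card_inter_le (A B C : Finset α) :
    #(A ∩ B) + #(B ∩ C) ≤ #(A ∩ C) + #B := by
  calc #(A ∩ B) + #(B ∩ C) = #(A ∩ B ∩ (B ∩ C)) + #(A ∩ B ∪ B ∩ C) := by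
        rw [add_comm #(_ ∩ _ ∩ _), card_union_add_card_inter]
    _ ≤ #(A ∩ C) + #B := by gcongr <;> grind

lemma card_add_card_add_card_le [Fintype α] (A B C : Finset α) :
    #A + #B + #C ≤ Fintype.card α + #(A ∩ B) + #(A ∩ C) + #(B ∩ C) := by
  have hAB := card_union_add_card_inter A B
  have hABC := card_union_add_card_inter (A ∪ B) C
  have hinter : #((A ∪ B) ∩ C) ≤ #(A ∩ C) + #(B ∩ C) :=
    union_inter_distrib_right A B C ▸ card_union_le _ _
  have := card_le_univ (A ∪ B ∪ C)
  omega

end InclusionExclusion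

section Cycles

variable {V : Type*} {G : SimpleGraph V}

lemma exists_isPath_of_isCompleteBetween [DecidableEq V] (k : ℕ) {X Y : Finset V}
    (h : G.IsCompleteBetween X Y) (hX : k < #X) (hY : k < #Y) {x y : V}
    (hx : x ∈ X) (hy : y ∈ Y) :
    ∃ p : G.Walk x y, p.IsPath ∧ p.length = 2 * k + 1 ∧ ∀ z ∈ p.support, z ∈ X ∪ Y := by
  induction k generalizing X Y x y with
  | zero =>
    have hxy : G.Adj x y := h hx hy
    exact ⟨hxy.toWalk, by simp [hxy.ne], by simp, by simp [hx, hy]⟩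
  | succ k ih =>
    obtain ⟨x', hx', hxx'⟩ := exists_mem_ne (by omega : 1 < #X) x
    obtain ⟨y', hy', hyy'⟩ := exists_mem_ne (by omega : 1 < #Y) y
    obtain ⟨p, hp, hlen, hsupp⟩ := ih (X := X.erase x) (Y := Y.erase y') (x := x') (y := y)
      (fun a ha b hb => h (mem_of_mem_erase ha) (mem_of_mem_erase hb))
      (by rw [card_erase_of_mem hx]; omega) (by rw [card_erase_of_mem hy']; omega)
      (by grind) (by grind)
    have hdisj : Disjoint X Y := disjoint_coe.1 h.disjoint
    have hxp : x ∉ p.support := fun hxp => by grind [hsupp x hxp, disjoint_left.1 hdisj hx]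
    have hy'p : y' ∉ p.support := fun hy'p => by grind [hsupp y' hy'p, disjoint_right.1 hdisj hy']
    refine ⟨.cons (h hx hy') (.cons (h hx' hy').symm p), ?_, by simp [hlen]; ring, ?_⟩
    · simp only [Walk.cons_isPath_iff, Walk.support_cons, List.mem_cons, not_or]
      exact ⟨⟨hp, hy'p⟩, (h hx hy').ne, hxp⟩
    · grind [Walk.support_cons]

theorem cycleGraph_isContained_of_isCompleteBetween {m : ℕ} (hm : 1 ≤ m) {X Y : Finset V}
    (h : G.IsCompleteBetween X Y) (hX : m < #X) (hY : m < #Y) {u x y : V}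
    (hx : x ∈ X) (hy : y ∈ Y) (hux : G.Adj u x) (huy : G.Adj u y) :
    cycleGraph (2 * m + 1) ⊑ G := by
  classical
  have hcard {A : Finset V} (hA : m < #A) : m - 1 < #(A.erase u) := by
    have := pred_card_le_card_erase (s := A) (a := u)
    omega
  obtain ⟨p, hp, hlen, hsupp⟩ := exists_isPath_of_isCompleteBetween (m - 1)
    (X := X.erase u) (Y := Y.erase u)
    (fun a ha b hb => h (mem_of_mem_erase ha) (mem_of_mem_erase hb)) (hcard hX) (hcard hY)
    (mem_erase.2 ⟨hux.ne', hx⟩) (mem_erase.2 ⟨huy.ne', hy⟩)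
  have hu : u ∉ p.support := fun hu => by simpa using hsupp u hu
  refine (cycleGraph_isContained_iff (by omega)).2
    ⟨u, .cons hux (p.concat huy.symm), (Walk.cons_isCycle_iff _ hux).2 ⟨hp.concat hu _, ?_⟩, ?_⟩
  · have hxy : x ≠ y := (h hx hy).ne
    rw [Walk.edges_concat, List.concat_eq_append, List.mem_append, not_or]
    refine ⟨fun he => hu (p.fst_mem_support_of_mem_edges he), ?_⟩
    simp [hxy, hux.ne']
  · simp only [Walk.length_cons, Walk.length_concat, hlen]
    omega

lemma not_isBipartite_cycleGraph_odd {m : ℕ} (hm : 1 ≤ m) :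
    ¬ (cycleGraph (2 * m + 1)).IsBipartite := by
  rw [← chromaticNumber_le_two_iff_isBipartite,
    chromaticNumber_cycleGraph_of_odd _ (by omega) ⟨m, rfl⟩]
  decide

end Cycles

section CommonNeighbourhood

variable {V : Type*} [Fintype V] (G : SimpleGraph V) [DecidableRel G.Adj]

/-- The common neighbourhood of the vertices in `X`; it is the whole vertex set if `X = ∅`. -/
def commonNbhd (X : Finset V) : Finset V := {z | ∀ x ∈ X, G.Adj x z}

variable {G}

lemma mem_commonNbhd {X : Finset V} {z : V} : z ∈ commonNbhd G X ↔ ∀ x ∈ X, G.Adj x z := by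
  simp [commonNbhd]

lemma isCompleteBetween_commonNbhd (X : Finset V) : G.IsCompleteBetween X (commonNbhd G X) :=
  fun _ hx _ hz => mem_commonNbhd.1 hz _ hx

lemma card_filter_lt_card_inter_neighborFinset_le [DecidableEq V] {W : Finset V} {k j : ℕ}
    (hW : ∀ X ⊆ W, #X = k + 1 → #(commonNbhd G X) ≤ j) :
    #{z | k < #(W ∩ G.neighborFinset z)} ≤ j * (#W).choose (k + 1) := by
  have hcover : ({z | k < #(W ∩ G.neighborFinset z)} : Finset V) ⊆
      (W.powersetCard (k + 1)).biUnion (commonNbhd G) := fun z hz => by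
    obtain ⟨X, hXz, hX⟩ := exists_subset_card_eq (Nat.succ_le_of_lt (mem_filter.1 hz).2)
    obtain ⟨hXW, hXN⟩ := subset_inter_iff.1 hXz
    refine mem_biUnion.2 ⟨X, mem_powersetCard.2 ⟨hXW, hX⟩, mem_commonNbhd.2 fun x hx => ?_⟩
    exact ((G.mem_neighborFinset z x).1 (hXN hx)).symm
  calc _ ≤ #((W.powersetCard (k + 1)).biUnion (commonNbhd G)) := card_le_card hcover
    _ ≤ #(W.powersetCard (k + 1)) * j := card_biUnion_le_card_mul _ _ _ fun X hX =>
        hW X (mem_powersetCard.1 hX).1 (mem_powersetCard.1 hX).2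
    _ = j * (#W).choose (k + 1) := by rw [card_powersetCard, mul_comm]

theorem exists_lt_card_commonNbhd {W : Finset V} {k j d : ℕ} (hd : ∀ w ∈ W, d ≤ G.degree w)
    (h : Fintype.card V * k + #W * (j * (#W).choose (k + 1)) < #W * d) :
    ∃ X ⊆ W, #X = k + 1 ∧ j < #(commonNbhd G X) := by
  classical
  by_contra! hW
  have hdouble : ∑ w ∈ W, G.degree w = ∑ z, #(W ∩ G.neighborFinset z) := by
    have := sum_card_bipartiteAbove_eq_sum_card_bipartiteBelow G.Adj (s := W) (t := univ)
    convert this using 3 with w _ z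
    · rw [← G.card_neighborFinset_eq_degree, G.neighborFinset_eq_filter, bipartiteAbove]
    · ext w
      simp [mem_bipartiteBelow, G.adj_comm]
  have hpoint (z : V) : #(W ∩ G.neighborFinset z) ≤
      k + if k < #(W ∩ G.neighborFinset z) then #W else 0 := by
    have := card_le_card (inter_subset_left (s₁ := W) (s₂ := G.neighborFinset z))
    split_ifs <;> omega
  refine h.not_ge ?_
  calc #W * d ≤ ∑ w ∈ W, G.degree w := card_nsmul_le_sum _ _ _ hd
    _ ≤ ∑ z, (k + if k < #(W ∩ G.neighborFinset z) then #W else 0) :=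
        hdouble.trans_le (sum_le_sum fun z _ => hpoint z)
    _ = Fintype.card V * k + #W * #{z | k < #(W ∩ G.neighborFinset z)} := by
        simp [sum_add_distrib, sum_ite, mul_comm]
    _ ≤ Fintype.card V * k + #W * (j * (#W).choose (k + 1)) := by
        gcongr; exact card_filter_lt_card_inter_neighborFinset_le hW

end CommonNeighbourhood

section Bipartite

variable {V : Type*} [Fintype V] [DecidableEq V] {G : SimpleGraph V} [DecidableRel G.Adj] {m : ℕ}

lemma not_adj_and_card_union_add_minDegree_le (hm : 1 ≤ m) (hG : (cycleGraph (2 * m + 1)).Free G)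
    {X Y : Finset V} (h : G.IsCompleteBetween X Y) (hX : m < #X) (hY : m < #Y) {u v : V}
    (hu : u ∈ Y) (hv : v ∈ Y) :
    ¬ G.Adj u v ∧ #(G.neighborFinset u ∪ G.neighborFinset v) + G.minDegree ≤ Fintype.card V := by
  have hapex {z x y : V} (hx : x ∈ X) (hy : y ∈ Y) (hzx : G.Adj z x) : ¬ G.Adj z y := fun hzy =>
    hG (cycleGraph_isContained_of_isCompleteBetween hm h hX hY hx hy hzx hzy)
  obtain ⟨x, hx⟩ : X.Nonempty := card_pos.1 (by omega)
  refine ⟨hapex hx hv (h hx hu).symm, ?_⟩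
  have hdisj {y : V} (hy : y ∈ Y) : Disjoint (G.neighborFinset y) (G.neighborFinset x) :=
    disjoint_left.2 fun z hzy hzx =>
      hapex hx hy ((G.mem_neighborFinset x z).1 hzx).symm ((G.mem_neighborFinset y z).1 hzy).symm
  calc _ ≤ #(G.neighborFinset u ∪ G.neighborFinset v) + #(G.neighborFinset x) := by
        rw [G.card_neighborFinset_eq_degree]; gcongr; exact G.minDegree_le_degree x
    _ = #(G.neighborFinset u ∪ G.neighborFinset v ∪ G.neighborFinset x) :=
        (card_union_of_disjoint (disjoint_union_left.2 ⟨hdisj hu, hdisj hv⟩)).symm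
    _ ≤ Fintype.card V := card_le_univ _

lemma not_adj_and_card_union_add_minDegree_le_of_le_card_inter (hm : 1 ≤ m)
    (hG : (cycleGraph (2 * m + 1)).Free G) {L : ℕ}
    (hL : Fintype.card V * m + L * (m * L.choose (m + 1)) < L * G.minDegree) {u v : V}
    (huv : L ≤ #(G.neighborFinset u ∩ G.neighborFinset v)) :
    ¬ G.Adj u v ∧ #(G.neighborFinset u ∪ G.neighborFinset v) + G.minDegree ≤ Fintype.card V := by
  obtain ⟨W, hW, rfl⟩ := exists_subset_card_eq huv
  obtain ⟨X, hXW, hX, hY⟩ :=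
    exists_lt_card_commonNbhd (fun w _ => G.minDegree_le_degree w) hL
  have hXuv (x : V) (hx : x ∈ X) : G.Adj u x ∧ G.Adj v x := by
    simpa using hW (hXW hx)
  exact not_adj_and_card_union_add_minDegree_le hm hG (isCompleteBetween_commonNbhd X)
    (by omega) hY (mem_commonNbhd.2 fun x hx => (hXuv x hx).1.symm)
    (mem_commonNbhd.2 fun x hx => (hXuv x hx).2.symm)

lemma le_card_inter_neighborFinset_trans (hm : 1 ≤ m) (hG : (cycleGraph (2 * m + 1)).Free G)
    {L : ℕ} (hL : Fintype.card V * m + L * (m * L.choose (m + 1)) < L * G.minDegree)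
    (hd : 2 * Fintype.card V + L ≤ 5 * G.minDegree) {u v w : V}
    (huv : L ≤ #(G.neighborFinset u ∩ G.neighborFinset v))
    (hvw : L ≤ #(G.neighborFinset v ∩ G.neighborFinset w)) :
    L ≤ #(G.neighborFinset u ∩ G.neighborFinset w) := by
  have huv' := (not_adj_and_card_union_add_minDegree_le_of_le_card_inter hm hG hL huv).2
  have hvw' := (not_adj_and_card_union_add_minDegree_le_of_le_card_inter hm hG hL hvw).2
  have hinter := card_inter_add_card_inter_le (G.neighborFinset u) (G.neighborFinset v)
    (G.neighborFinset w)
  have hiuv := card_union_add_card_inter (G.neighborFinset u) (G.neighborFinset v)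
  have hivw := card_union_add_card_inter (G.neighborFinset v) (G.neighborFinset w)
  simp only [G.card_neighborFinset_eq_degree] at hinter hiuv hivw
  have := G.minDegree_le_degree u
  have := G.minDegree_le_degree v
  have := G.minDegree_le_degree w
  omega

theorem isBipartite_of_cycleGraph_free (hm : 1 ≤ m) :
    ∃ C, ∀ {V : Type*} [Fintype V] (G : SimpleGraph V) [DecidableRel G.Adj],
      (cycleGraph (2 * m + 1)).Free G → 2 * Fintype.card V + C ≤ 5 * G.minDegree →
        G.IsBipartite := by
  classical
  -- Since `3 > 5 / 2`, the bound `2 * card V ≤ 5 * minDegree` gives `m * card V < L * minDegree`.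
  set L := 3 * (m + 1) with hLdef
  set K := m * L.choose (m + 1)
  refine ⟨5 * (K + L + 1), fun {V} _ G _ hG hd => ?_⟩
  have hL : Fintype.card V * m + L * K < L * G.minDegree := by nlinarith
  rcases isEmpty_or_nonempty V with hV | ⟨⟨x⟩⟩
  · exact .of_isEmpty ..
  let sim (u v : V) : Prop := L ≤ #(G.neighborFinset u ∩ G.neighborFinset v)
  have hcomm {u v : V} (h : sim u v) : sim v u := by simpa only [sim, inter_comm] using h
  have htrans {u v w : V} (huv : sim u v) (hvw : sim v w) : sim u w :=
    le_card_inter_neighborFinset_trans hm hG hL (by omega) huv hvw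
  have hnadj {u v : V} (huv : sim u v) : ¬ G.Adj u v :=
    (not_adj_and_card_union_add_minDegree_le_of_le_card_inter hm hG hL huv).1
  have htriple (u v : V) (hu : ¬ sim x u) (hv : ¬ sim x v) : sim u v := by
    by_contra huv
    have := card_add_card_add_card_le (G.neighborFinset x) (G.neighborFinset u)
      (G.neighborFinset v)
    simp only [G.card_neighborFinset_eq_degree] at this
    have := G.minDegree_le_degree x
    have := G.minDegree_le_degree u
    have := G.minDegree_le_degree v
    omega
  have hcol : G.Coloring Bool := .mk (fun v => decide (sim x v)) fun {u v} hadj heq => by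
    by_cases hu : sim x u
    · exact hnadj (htrans (hcomm hu) ((decide_eq_decide.1 heq).1 hu)) hadj
    · exact hnadj (htriple u v hu (mt (decide_eq_decide.1 heq).2 hu)) hadj
  exact hcol.colorable

end Bipartite

section Clique

variable {V : Type*} {G : SimpleGraph V}

lemma exists_isNClique_succ {v : V} {n : ℕ} {S A : Finset V} (hv : v ∈ S)
    (hAS : A ⊆ S) (hA : ∀ w ∈ A, G.Adj v w) (h : ∃ T ⊆ A, G.IsNClique n T) :
    ∃ T ⊆ S, G.IsNClique (n + 1) T := by
  classical
  obtain ⟨T, hTA, hT⟩ := h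
  exact ⟨insert v T, insert_subset hv (hTA.trans hAS), hT.insert fun w hw => hA w (hTA hw)⟩

theorem exists_isNClique_or_isNClique_compl (G : SimpleGraph V) (a b : ℕ) {S : Finset V}
    (hS : (a + b).choose a ≤ #S) :
    (∃ T ⊆ S, G.IsNClique a T) ∨ ∃ T ⊆ S, Gᶜ.IsNClique b T := by
  classical
  induction a generalizing b S with
  | zero => exact .inl ⟨∅, by simp⟩
  | succ a iha =>
    induction b generalizing S with
    | zero => exact .inr ⟨∅, by simp⟩
    | succ b ihb =>
      obtain ⟨v, hv⟩ : S.Nonempty := card_pos.1 ((Nat.choose_pos (by omega)).trans_le hS)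
      have hsplit : #{w ∈ S.erase v | G.Adj v w} + #{w ∈ S.erase v | ¬ G.Adj v w} + 1 = #S := by
        rw [card_filter_add_card_filter_not, card_erase_add_one hv]
      have hpascal : (a + 1 + (b + 1)).choose (a + 1) =
          (a + (b + 1)).choose a + (a + 1 + b).choose (a + 1) := by
        rw [show a + 1 + (b + 1) = a + (b + 1) + 1 by ring, Nat.choose_succ_succ',
          show a + (b + 1) = a + 1 + b by ring]
      have hsub (P : V → Prop) [DecidablePred P] : {w ∈ S.erase v | P w} ⊆ S :=
        (filter_subset _ _).trans (erase_subset _ _)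
      obtain hA | hB : (a + (b + 1)).choose a ≤ #{w ∈ S.erase v | G.Adj v w} ∨
          (a + 1 + b).choose (a + 1) ≤ #{w ∈ S.erase v | ¬ G.Adj v w} := by omega
      · refine (iha (b + 1) hA).imp (exists_isNClique_succ hv (hsub _) (by simp)) ?_
        exact fun ⟨T, hT, h⟩ => ⟨T, hT.trans (hsub _), h⟩
      · refine (ihb hB).imp ?_ (exists_isNClique_succ hv (hsub _) (by simp +contextual [eq_comm]))
        exact fun ⟨T, hT, h⟩ => ⟨T, hT.trans (hsub _), h⟩

lemma isContained_of_isNClique {W : Type*} [Fintype W] (H : SimpleGraph W) {T : Finset V}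
    (hT : G.IsNClique (Fintype.card W) T) : H ⊑ G := by
  have htop : (⊤ : SimpleGraph W) ⊑ G :=
    not_free.1 (cliqueFree_iff_top_free.not.1 hT.not_cliqueFree)
  exact htop.mono_left le_top

lemma exists_isNClique_compl_of_free {W : Type*} [Fintype W] {H : SimpleGraph W}
    (hH : H.Free G) {t : ℕ} (S : Finset V)
    (hS : (Fintype.card W + t).choose (Fintype.card W) ≤ #S) : ∃ T ⊆ S, Gᶜ.IsNClique t T :=
  (exists_isNClique_or_isNClique_compl G _ t hS).resolve_left fun ⟨_, _, hT⟩ =>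
    hH (isContained_of_isNClique H hT)

theorem exists_isNClique_compl_of_isBipartite [Fintype V] {n : ℕ} (hG : G.IsBipartite)
    (hn : 2 * n < Fintype.card V) : ∃ T, Gᶜ.IsNClique (n + 1) T := by
  classical
  obtain ⟨col⟩ := hG
  obtain ⟨i, hi⟩ := Fintype.exists_lt_card_fiber_of_mul_lt_card col (n := n) (by simpa)
  obtain ⟨T, hT, hcard⟩ := exists_subset_card_eq (Nat.succ_le_of_lt hi)
  refine ⟨T, (isNClique_compl G).2 ⟨fun u hu v hv _ => ?_, hcard⟩⟩
  exact col.not_adj_of_mem_colorClass (c := i) (mem_filter.1 (hT hu)).2 (mem_filter.1 (hT hv)).2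

end Clique

section Fan

variable {V : Type*} {G : SimpleGraph V}

lemma exists_pairwise_disjoint_isNClique {t c : ℕ}
    (hc : ∀ S : Finset V, c ≤ #S → ∃ T ⊆ S, G.IsNClique t T) (n : ℕ) {S : Finset V}
    (hS : n * t + c ≤ #S) :
    ∃ F : Fin n → Finset V,
      (∀ i, F i ⊆ S) ∧ (∀ i, G.IsNClique t (F i)) ∧ Pairwise (Function.onFun Disjoint F) := by
  classical
  induction n generalizing S with
  | zero => exact ⟨Fin.elim0, fun i => i.elim0, fun i => i.elim0, fun i => i.elim0⟩
  | succ n ih =>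
    rw [Nat.succ_mul] at hS
    obtain ⟨T, hTS, hT⟩ := hc S (by omega)
    obtain ⟨F, hFS, hF, hdisj⟩ := ih (S := S \ T) (by
      rw [card_sdiff_of_subset hTS, hT.card_eq]; omega)
    have hTF (i : Fin n) : Disjoint T (F i) := disjoint_sdiff.mono_right (hFS i)
    refine ⟨Fin.cons T F, Fin.cases hTS fun i => (hFS i).trans sdiff_subset, Fin.cases hT hF, ?_⟩
    refine Fin.cases (Fin.cases (fun h => (h rfl).elim) fun j _ => hTF j) fun i =>
      Fin.cases (fun _ => (hTF i).symm) fun j hij => hdisj (fun h => hij (congrArg _ h))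

lemma genFan_adj_none {n t : ℕ} {p : Fin n × Fin t} : (genFan n t).Adj none (some p) := by
  simp [genFan]

lemma fst_eq_of_genFan_adj_some {n t : ℕ} {p q : Fin n × Fin t}
    (h : (genFan n t).Adj (some p) (some q)) : p.1 = q.1 := by
  simp only [genFan, fromRel_adj] at h
  grind

lemma genFan_isContained {n t : ℕ} {v : V} {F : Fin n → Finset V}
    (hv : ∀ i, ∀ w ∈ F i, G.Adj v w) (hF : ∀ i, G.IsNClique t (F i))
    (hdisj : Pairwise (Function.onFun Disjoint F)) : genFan n t ⊑ G := by
  let e (i : Fin n) : Fin t ≃ F i := (finCongr (hF i).card_eq.symm).trans (F i).equivFin.symm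
  let f : Option (Fin n × Fin t) → V := fun a => a.elim v fun p => e p.1 p.2
  have hne {p q : Fin n × Fin t} (hpq : p ≠ q) : f (some p) ≠ f (some q) := by
    obtain ⟨i, a⟩ := p
    obtain ⟨j, b⟩ := q
    intro h
    rcases eq_or_ne i j with rfl | hij
    · exact hpq (congrArg _ ((e i).injective (Subtype.ext h)))
    · have hj : f (some (i, a)) ∈ F j := h.symm ▸ (e j b).2
      exact Finset.disjoint_left.1 (hdisj hij) (e i a).2 hj
  have hnone (p : Fin n × Fin t) : G.Adj v (f (some p)) := hv p.1 _ (e p.1 p.2).2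
  have hadj : ∀ {a b}, (genFan n t).Adj a b → G.Adj (f a) (f b)
    | none, none, h => (h.ne rfl).elim
    | none, some q, _ => hnone q
    | some p, none, _ => (hnone p).symm
    | some p, some q, h => by
      obtain ⟨i, a⟩ := p
      obtain rfl : i = q.1 := fst_eq_of_genFan_adj_some h
      exact (hF _).isClique (e _ a).2 (e _ q.2).2 (hne fun hpq => h.ne (congrArg some hpq))
  have hinj : Function.Injective f
    | none, none, _ => rfl
    | none, some q, h => ((hnone q).ne h).elim
    | some p, none, h => ((hnone p).ne' h).elim
    | some p, some q, h => congrArg some (by_contra fun hpq => hne hpq h)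
  exact ⟨⟨f, hadj⟩, hinj⟩

lemma degree_lt_of_genFan_free [Fintype V] [DecidableRel G.Adj] {n t c : ℕ}
    (hc : ∀ S : Finset V, c ≤ #S → ∃ T ⊆ S, G.IsNClique t T) (hG : (genFan n t).Free G) (v : V) :
    G.degree v < n * t + c := by
  by_contra! hdeg
  obtain ⟨F, hFv, hF, hdisj⟩ := exists_pairwise_disjoint_isNClique hc n
    (hdeg.trans_eq (G.card_neighborFinset_eq_degree v).symm)
  exact hG (genFan_isContained (fun i w hw => (G.mem_neighborFinset v w).1 (hFv i hw)) hF hdisj)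

lemma genFan_preconnected (n t : ℕ) : (genFan n t).Preconnected := by
  have hnone : ∀ a, (genFan n t).Reachable none a
    | none => .rfl
    | some _ => genFan_adj_none.reachable
  exact fun a b => (hnone a).symm.trans (hnone b)

end Fan

section RamseyNumber

variable {V W : Type*} {G : SimpleGraph V} {H : SimpleGraph W}

lemma containsCopy_iff_isContained : containsCopy G H ↔ H ⊑ G :=
  ⟨fun ⟨f, hf⟩ => ⟨⟨f, hf⟩⟩, fun ⟨f⟩ => ⟨f.toHom, f.injective⟩⟩

lemma ramseyNumber_eq_succ {N : ℕ} (hN : arrows (N + 1) G H)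
    (hlt : ∀ k ≤ N, ¬ arrows k G H) : ramseyNumber G H = N + 1 := by
  refine IsLeast.csInf_eq ⟨⟨N.succ_pos, hN⟩, fun k hk => ?_⟩
  by_contra hkN
  exact hlt k (by omega) hk.2

theorem not_arrows_of_preconnected [Fintype W] (hG : ¬ G.IsBipartite) (hH : H.Preconnected)
    {k N : ℕ} (hk : k < Fintype.card W) (hN : N ≤ 2 * k) : ¬ arrows N G H := by
  -- Red joins vertices of different parity; `v ↦ v / 2` embeds either parity class into `Fin k`.
  let col (v : Fin N) : Fin 2 := Fin.ofNat 2 v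
  let R : SimpleGraph (Fin N) := (⊤ : SimpleGraph (Fin 2)).comap col
  intro h
  rcases h R with ⟨f, -⟩ | ⟨f, hf⟩
  · exact hG ⟨(Coloring.mk col fun hadj => hadj : R.Coloring (Fin 2)).comp f⟩
  · have hadj {a b : W} (h : H.Adj a b) : col (f a) = col (f b) :=
      not_not.1 ((compl_adj R _ _).1 (f.map_adj h)).2
    have hconst (a b : W) : col (f a) = col (f b) := by
      obtain ⟨p⟩ := hH a b
      induction p with
      | nil => rfl
      | cons h _ ih => exact (hadj h).trans ih
    let half (a : W) : Fin k := ⟨(f a : ℕ) / 2, by omega⟩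
    have hhalf : Function.Injective half := fun a b hab => hf <| by
      have hmod : (f a : ℕ) % 2 = f b % 2 := Fin.ext_iff.1 (hconst a b)
      have hdiv : (f a : ℕ) / 2 = f b / 2 := Fin.ext_iff.1 hab
      omega
    exact hk.not_ge (by simpa using Fintype.card_le_of_injective half hhalf)

theorem arrows_cycleGraph_genFan {m : ℕ} (hm : 1 ≤ m) (t : ℕ) :
    ∃ n₀, ∀ n, n₀ ≤ n → arrows (2 * n * t + 1) (cycleGraph (2 * m + 1)) (genFan n t) := by
  classical
  obtain ⟨C, hC⟩ := isBipartite_of_cycleGraph_free hm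
  let c := (2 * m + 1 + t).choose (2 * m + 1)
  refine ⟨C + 5 * c, fun n hn R => ?_⟩
  rw [containsCopy_iff_isContained, containsCopy_iff_isContained, or_iff_not_imp_left]
  refine fun hcycle => by_contra fun hfan => ?_
  have hclique {T : Finset _} (hT : Rᶜ.IsNClique (n * t + 1) T) : False :=
    hfan (isContained_of_isNClique _ (by simpa using hT))
  rcases t.eq_zero_or_pos with rfl | ht
  · exact hclique (T := {0}) (by simp)
  have hnt : n ≤ n * t := Nat.le_mul_of_pos_right n ht
  have hcard : Fintype.card (Fin (2 * n * t + 1)) = 2 * (n * t) + 1 := by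
    rw [Fintype.card_fin, mul_assoc]
  have hblueK (S : Finset _) (hS : c ≤ #S) : ∃ T ⊆ S, Rᶜ.IsNClique t T :=
    exists_isNClique_compl_of_free hcycle S (by rwa [Fintype.card_fin])
  have hmin : n * t + 1 ≤ R.minDegree + c := by
    obtain ⟨v, hv⟩ := R.exists_minimal_degree_vertex
    have hblue := degree_lt_of_genFan_free hblueK hfan v
    rw [degree_compl, hcard, ← hv] at hblue
    omega
  have hbip : R.IsBipartite := hC R hcycle (by omega)
  obtain ⟨T, hT⟩ := exists_isNClique_compl_of_isBipartite (n := n * t) hbip (by omega)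
  exact hclique hT

end RamseyNumber

theorem statement_15_general (m t : ℕ) (hm : 1 ≤ m) :
    ∃ n₀ : ℕ, ∀ n : ℕ, n₀ ≤ n →
      ramseyNumber (SimpleGraph.cycleGraph (2 * m + 1)) (genFan n t) = 2 * n * t + 1 := by
  obtain ⟨n₀, h⟩ := arrows_cycleGraph_genFan hm t
  refine ⟨n₀, fun n hn => ramseyNumber_eq_succ (h n hn) fun k hk => ?_⟩
  exact not_arrows_of_preconnected (k := n * t) (not_isBipartite_cycleGraph_odd hm)
    (genFan_preconnected n t) (by simp) (by linarith)

theorem statement_15 (m t : ℕ) (hm : 1 ≤ m) (ht : 2 ≤ t) :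
    ∃ n₀ : ℕ, ∀ n : ℕ, n₀ ≤ n →
      ramseyNumber (SimpleGraph.cycleGraph (2 * m + 1)) (genFan n t) = 2 * n * t + 1 :=
  statement_15_general m t hm
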